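/- Let k be a field and p(x) ∈ k[x] an irreducible polynomial. Let M_p be the Prüfer k[x]-module at p, namely the quotient k[x][1/p(x)] / k[x] of the localization of k[x] away from p(x) by the image of k[x]. Then the endomorphism ring End_{k[x]}(M_p) is isomorphic as a ring to the formal power series ring k_{p(x)}[[t]] in one variable t over the field k_{p(x)} := k[x]/(p(x)). -/

import Mathlib

/-- The Prüfer `k[x]`-module at an irreducible polynomial `p`: the quotient
`k[x][1/p] / k[x]` of the localization of `k[x]` away from `p` by the image of `k[x]`. -/
abbrev PruferModule (k : Type*) [Field k] (p : Polynomial k) :=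
  Localization.Away p ⧸
    LinearMap.range (Algebra.linearMap (Polynomial k) (Localization.Away p))

/-!
The module `M_p` is the increasing union of the cyclic submodules generated by the classes of
`1 / p ^ n`, each of them the full `p ^ n`-torsion and isomorphic to `k[x] / (p ^ n)`. An
endomorphism is therefore a compatible family of scalars modulo `p ^ n`, and `End M_p` is the
`p`-adic completion of `k[x]`.

The residue field `k[x] / (p)` need not be separable over `k`, but it is formally smooth over its
prime field, which is perfect: the vanishing of `H¹` of the cotangent complex can be tested on
finitely generated subfields. Hence the residue field lifts to a coefficient field of the
completion, and sending `t` to `p` identifies the completion with power series over it.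
-/

open scoped nonZeroDivisors PowerSeries

section EndOfPruferSequence

variable {R M : Type*} [CommRing R] [AddCommGroup M] [Module R M]

/-- On a fixed `x` the scalars `b n` are eventually constant, and this value defines `φ x`. -/
theorem exists_end_apply_eq_smul_of_adicCauchySequence (I : Ideal R)
    (htors : ∀ x : M, ∃ n, ∀ a ∈ I ^ n, a • x = 0) (b : AdicCompletion.AdicCauchySequence I R) :
    ∃ φ : Module.End R M, ∀ n x, (∀ a ∈ I ^ n, a • x = 0) → φ x = b n • x := by
  have smul_eq_of_le {m n : ℕ} {x : M} (hmn : m ≤ n) (hx : ∀ a ∈ I ^ m, a • x = 0) :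
      b n • x = b m • x := by
    have hmem : b n - b m ∈ I ^ m :=
      Ideal.Quotient.eq.mp (AdicCompletion.Ideal.mk_eq_mk I hmn b)
    rw [← sub_eq_zero, ← sub_smul, hx _ hmem]
  have smul_eq {m n : ℕ} {x : M} (hm : ∀ a ∈ I ^ m, a • x = 0) (hn : ∀ a ∈ I ^ n, a • x = 0) :
      b m • x = b n • x := by
    rcases le_total m n with h | h
    exacts [(smul_eq_of_le h hm).symm, smul_eq_of_le h hn]
  choose N hN using htors
  refine ⟨{ toFun x := b (N x) • x, map_add' x y := ?_, map_smul' r x := ?_ },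
    fun n x hx ↦ smul_eq (hN x) hx⟩
  · have hx : ∀ a ∈ I ^ max (N x) (N y), a • x = 0 :=
      fun a ha ↦ hN x a (Ideal.pow_le_pow_right (le_max_left _ _) ha)
    have hy : ∀ a ∈ I ^ max (N x) (N y), a • y = 0 :=
      fun a ha ↦ hN y a (Ideal.pow_le_pow_right (le_max_right _ _) ha)
    have hxy : ∀ a ∈ I ^ max (N x) (N y), a • (x + y) = 0 :=
      fun a ha ↦ by rw [smul_add, hx a ha, hy a ha, add_zero]
    rw [smul_eq (hN _) hxy, smul_eq (hN x) hx, smul_eq (hN y) hy, smul_add]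
  · have hrx : ∀ a ∈ I ^ N x, a • r • x = 0 :=
      fun a ha ↦ by rw [smul_comm, hN x a ha, smul_zero]
    rw [smul_eq (hN _) hrx, smul_comm, RingHom.id_apply]

/-- Generators presenting `M` as the direct limit of the modules `R / (p ^ n)` along
multiplication by `p`: the element `u n` is the image of `1 : R / (p ^ n)`. -/
structure IsPruferSequence (p : R) (u : ℕ → M) : Prop where
  smul_succ (n : ℕ) : p • u (n + 1) = u n
  smul_eq_zero_iff (n : ℕ) (a : R) : a • u n = 0 ↔ p ^ n ∣ a
  exists_smul_eq (x : M) : ∃ n, ∃ a : R, a • u n = x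

namespace IsPruferSequence

variable {p : R} {u : ℕ → M} (hu : IsPruferSequence p u)
include hu

theorem pow_smul_add (m n : ℕ) : p ^ m • u (n + m) = u n := by
  induction m with
  | zero => rw [pow_zero, one_smul, add_zero]
  | succ m ih => rw [pow_succ, mul_smul, ← add_assoc, hu.smul_succ, ih]

theorem pow_smul_self (n : ℕ) : p ^ n • u n = 0 :=
  (hu.smul_eq_zero_iff n _).mpr dvd_rfl

theorem smul_eq_smul_iff {n : ℕ} {a b : R} :
    a • u n = b • u n ↔
      Ideal.Quotient.mk (Ideal.span {p} ^ n) a = Ideal.Quotient.mk (Ideal.span {p} ^ n) b := by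
  rw [← sub_eq_zero, ← sub_smul, hu.smul_eq_zero_iff, Ideal.Quotient.eq,
    Ideal.span_singleton_pow, Ideal.mem_span_singleton]

theorem exists_smul_eq_of_pow_smul_eq_zero {n : ℕ} {x : M} (hx : p ^ n • x = 0) :
    ∃ a : R, a • u n = x := by
  obtain ⟨N, c, rfl⟩ := hu.exists_smul_eq x
  rcases le_total N n with h | h
  · obtain ⟨d, rfl⟩ := Nat.exists_eq_add_of_le h
    exact ⟨c * p ^ d, by rw [mul_smul, hu.pow_smul_add]⟩
  · obtain ⟨d, rfl⟩ := Nat.exists_eq_add_of_le' h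
    rw [smul_comm, hu.pow_smul_add, hu.smul_eq_zero_iff] at hx
    obtain ⟨a, rfl⟩ := hx
    exact ⟨a, by rw [mul_comm, mul_smul, add_comm, hu.pow_smul_add]⟩

theorem exists_smul_eq_apply (n : ℕ) (φ : Module.End R M) : ∃ a : R, a • u n = φ (u n) :=
  hu.exists_smul_eq_of_pow_smul_eq_zero <| by rw [← map_smul, hu.pow_smul_self, map_zero]

theorem exists_forall_mem_span_pow_smul_eq_zero (x : M) :
    ∃ n, ∀ a ∈ Ideal.span {p} ^ n, a • x = 0 := by
  obtain ⟨n, c, rfl⟩ := hu.exists_smul_eq x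
  refine ⟨n, fun a ha ↦ ?_⟩
  rw [Ideal.span_singleton_pow, Ideal.mem_span_singleton] at ha
  rw [smul_comm, (hu.smul_eq_zero_iff n a).mpr ha, smul_zero]

/-- The class modulo `p ^ n` of the scalar by which an endomorphism acts on `u n`; it describes the
restriction of the endomorphism to the `p ^ n`-torsion, which is generated by `u n`. -/
noncomputable def endToQuotient (n : ℕ) : Module.End R M →+* R ⧸ Ideal.span {p} ^ n :=
  have smul_choose (φ : Module.End R M) :=
    (hu.exists_smul_eq_apply n φ).choose_spec
  { toFun φ := Ideal.Quotient.mk _ (hu.exists_smul_eq_apply n φ).choose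
    map_zero' := by
      rw [← map_zero (Ideal.Quotient.mk _), ← hu.smul_eq_smul_iff, smul_choose, zero_smul,
        LinearMap.zero_apply]
    map_one' := by
      rw [← map_one (Ideal.Quotient.mk _), ← hu.smul_eq_smul_iff, smul_choose, one_smul,
        Module.End.one_apply]
    map_add' φ ψ := by
      rw [← map_add, ← hu.smul_eq_smul_iff, add_smul, smul_choose, smul_choose, smul_choose,
        LinearMap.add_apply]
    map_mul' φ ψ := by
      rw [← map_mul, ← hu.smul_eq_smul_iff, smul_choose, mul_comm, mul_smul, smul_choose,
        ← map_smul, smul_choose, Module.End.mul_apply] }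

theorem endToQuotient_eq_mk_iff {n : ℕ} {φ : Module.End R M} {a : R} :
    hu.endToQuotient n φ = Ideal.Quotient.mk _ a ↔ φ (u n) = a • u n := by
  rw [← (hu.exists_smul_eq_apply n φ).choose_spec, hu.smul_eq_smul_iff]
  rfl

theorem factorPow_comp_endToQuotient {m n : ℕ} (hmn : m ≤ n) :
    (Ideal.Quotient.factorPow (Ideal.span {p}) hmn).comp (hu.endToQuotient n) =
      hu.endToQuotient m := by
  ext φ
  obtain ⟨a, ha⟩ := Ideal.Quotient.mk_surjective (hu.endToQuotient n φ)
  obtain ⟨d, rfl⟩ := Nat.exists_eq_add_of_le hmn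
  rw [RingHom.comp_apply, ← ha, Ideal.Quotient.factor_mk, eq_comm, hu.endToQuotient_eq_mk_iff,
    ← hu.pow_smul_add d m, map_smul, hu.endToQuotient_eq_mk_iff.mp ha.symm, smul_comm]

/-- The action of an endomorphism on all the `u n` simultaneously, as a `p`-adic scalar. -/
noncomputable def endToAdicCompletion :
    Module.End R M →+* AdicCompletion (Ideal.span {p}) R :=
  AdicCompletion.liftRingHom _ hu.endToQuotient hu.factorPow_comp_endToQuotient

theorem evalₐ_endToAdicCompletion (n : ℕ) (φ : Module.End R M) :
    AdicCompletion.evalₐ _ n (hu.endToAdicCompletion φ) = hu.endToQuotient n φ :=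
  AdicCompletion.evalₐ_liftRingHom _ _ _ n φ

theorem endToAdicCompletion_injective : Function.Injective hu.endToAdicCompletion := by
  rw [injective_iff_map_eq_zero]
  intro φ hφ
  have apply_generator (n : ℕ) : φ (u n) = 0 := by
    rw [← zero_smul R (u n), ← hu.endToQuotient_eq_mk_iff, ← hu.evalₐ_endToAdicCompletion, hφ,
      map_zero, map_zero]
  ext x
  obtain ⟨n, a, rfl⟩ := hu.exists_smul_eq x
  rw [map_smul, apply_generator, smul_zero, LinearMap.zero_apply]

theorem endToAdicCompletion_surjective : Function.Surjective hu.endToAdicCompletion := by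
  intro x
  induction x using AdicCompletion.induction_on with
  | _ b =>
  obtain ⟨φ, hφ⟩ := exists_end_apply_eq_smul_of_adicCauchySequence (Ideal.span {p})
    hu.exists_forall_mem_span_pow_smul_eq_zero b
  refine ⟨φ, AdicCompletion.ext_evalₐ fun n ↦ ?_⟩
  rw [hu.evalₐ_endToAdicCompletion, AdicCompletion.evalₐ_mk, hu.endToQuotient_eq_mk_iff]
  refine hφ n _ fun a ha ↦ (hu.smul_eq_zero_iff n a).mpr ?_
  rwa [Ideal.span_singleton_pow, Ideal.mem_span_singleton] at ha

/-- The endomorphism ring of a Prüfer module is the `p`-adic completion of the base ring. -/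
noncomputable def endEquivAdicCompletion :
    Module.End R M ≃+* AdicCompletion (Ideal.span {p}) R :=
  .ofBijective hu.endToAdicCompletion
    ⟨hu.endToAdicCompletion_injective, hu.endToAdicCompletion_surjective⟩

end IsPruferSequence

end EndOfPruferSequence

section LocalizationAway

open IsLocalization.Away

variable {R : Type*} (L : Type*) [CommRing R] [CommRing L] [Algebra R L] {p : R}
  [IsLocalization.Away p L]

theorem smul_invSelf_pow_eq_iff {n : ℕ} {a : R} {y : L} :
    a • (invSelf p : L) ^ n = y ↔ algebraMap R L a = algebraMap R L (p ^ n) * y := by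
  have pow_mul_invSelf_pow : algebraMap R L (p ^ n) * invSelf p ^ n = 1 := by
    rw [map_pow, ← mul_pow, mul_invSelf, one_pow]
  rw [← (IsUnit.of_mul_eq_one _ pow_mul_invSelf_pow).mul_right_inj, mul_smul_comm,
    pow_mul_invSelf_pow, Algebra.algebraMap_eq_smul_one a]

theorem isPruferSequence_mkQ_invSelf_pow (hp : p ∈ R⁰) :
    IsPruferSequence p fun n ↦
      (LinearMap.range (Algebra.linearMap R L)).mkQ (invSelf p ^ n) where
  smul_succ n := by
    rw [← map_smul]
    congr 1
    rw [pow_succ', Algebra.smul_def, ← mul_assoc, mul_invSelf, one_mul]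
  smul_eq_zero_iff n a := by
    have algebraMap_inj : Function.Injective (algebraMap R L) :=
      IsLocalization.injective L (Submonoid.powers_le.mpr hp)
    rw [← map_smul, Submodule.mkQ_apply, Submodule.Quotient.mk_eq_zero, LinearMap.mem_range,
      dvd_def]
    refine exists_congr fun g ↦ ?_
    rw [Algebra.linearMap_apply, eq_comm, smul_invSelf_pow_eq_iff, ← map_mul, algebraMap_inj.eq_iff]
  exists_smul_eq x := by
    obtain ⟨y, rfl⟩ := Submodule.mkQ_surjective _ x
    obtain ⟨n, a, ha⟩ := surj p y
    refine ⟨n, a, ?_⟩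
    rw [← map_smul, (smul_invSelf_pow_eq_iff L).mpr]
    rw [← ha, map_pow, mul_comm]

end LocalizationAway

section PowerSeries

variable {F B : Type*} [CommRing F] [CommRing B]

theorem exists_powerSeries_ringHom_of_isAdicComplete (I : Ideal B) [IsAdicComplete I B]
    (σ : F →+* B) {b : B} (hb : b ∈ I) :
    ∃ f : F⟦X⟧ →+* B, f PowerSeries.X = b ∧ ∀ c, f (PowerSeries.C c) = σ c := by
  let _ : WithIdeal B := ⟨I⟩
  let _ : UniformSpace F := ⊥
  have : DiscreteUniformity F := ⟨rfl⟩
  obtain ⟨_, _⟩ := (IsAdic.isAdicComplete_iff (I := I) rfl).mp ‹_›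
  have hσ : Continuous σ := continuous_of_discreteTopology
  have hb : PowerSeries.HasEval b := WithIdeal.isTopologicallyNilpotent_of_mem hb
  refine ⟨PowerSeries.eval₂Hom hσ hb, ?_, fun c ↦ ?_⟩ <;> rw [PowerSeries.coe_eval₂Hom]
  exacts [PowerSeries.eval₂_X σ b, PowerSeries.eval₂_C σ b c]

/-- If `f g = 0`, then `g` has constant coefficient zero and `f (g / X) = 0`, so the argument can be
repeated with `g / X`. -/
theorem powerSeries_ringHom_injective {f : F⟦X⟧ →+* B} (hX : f PowerSeries.X ∈ B⁰)
    (hC : Function.Injective ((Ideal.Quotient.mk (Ideal.span {f PowerSeries.X})).comp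
      (f.comp PowerSeries.C))) :
    Function.Injective f := by
  have exists_eq_X_mul {g : F⟦X⟧} (hg : f g = 0) : ∃ h, g = PowerSeries.X * h ∧ f h = 0 := by
    have constantCoeff_eq_zero : PowerSeries.constantCoeff g = 0 := by
      refine (injective_iff_map_eq_zero _).mp hC _ (Ideal.Quotient.eq_zero_iff_mem.mpr ?_)
      rw [PowerSeries.eq_X_mul_shift_add_const g, map_add, map_mul] at hg
      rw [RingHom.comp_apply, eq_neg_of_add_eq_zero_right hg, Ideal.mem_span_singleton]
      exact (dvd_mul_right _ _).neg_right
    obtain ⟨h, rfl⟩ := PowerSeries.X_dvd_iff.mpr constantCoeff_eq_zero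
    rw [map_mul, mul_comm] at hg
    exact ⟨h, rfl, (mul_right_mem_nonZeroDivisors_eq_zero_iff hX).mp hg⟩
  rw [injective_iff_map_eq_zero]
  intro g hg
  ext n
  induction n generalizing g with
  | zero =>
    obtain ⟨h, rfl, -⟩ := exists_eq_X_mul hg
    simp
  | succ n ih =>
    obtain ⟨h, rfl, hh⟩ := exists_eq_X_mul hg
    rw [PowerSeries.coeff_succ_X_mul, ih h hh, map_zero, map_zero]

theorem powerSeries_ringHom_surjective {f : F⟦X⟧ →+* B}
    [IsHausdorff (Ideal.span {f PowerSeries.X}) B]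
    (hC : Function.Surjective ((Ideal.Quotient.mk (Ideal.span {f PowerSeries.X})).comp
      (f.comp PowerSeries.C))) :
    Function.Surjective f := by
  have map_span_X : (Ideal.span {PowerSeries.X}).map f = Ideal.span {f PowerSeries.X} := by
    rw [Ideal.map_span, Set.image_singleton]
  have : IsHausdorff ((Ideal.span {PowerSeries.X}).map f) B := by rwa [map_span_X]
  refine surjective_of_mk_map_comp_surjective (I := Ideal.span {PowerSeries.X}) f ?_
  rw [map_span_X]
  exact Function.Surjective.of_comp (g := PowerSeries.C) hC

theorem nonempty_powerSeries_ringEquiv_of_isAdicComplete {b : B} (hb : b ∈ B⁰)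
    [IsAdicComplete (Ideal.span {b}) B] (σ : F →+* B)
    (hσ : Function.Bijective ((Ideal.Quotient.mk (Ideal.span {b})).comp σ)) :
    Nonempty (F⟦X⟧ ≃+* B) := by
  obtain ⟨f, rfl, hC⟩ := exists_powerSeries_ringHom_of_isAdicComplete (Ideal.span {b}) σ
    (Ideal.mem_span_singleton_self b)
  obtain rfl : f.comp PowerSeries.C = σ := RingHom.ext hC
  exact ⟨.ofBijective f
    ⟨powerSeries_ringHom_injective hb hσ.injective, powerSeries_ringHom_surjective hσ.surjective⟩⟩

end PowerSeries

section AdicCompletion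

variable {R : Type*} [CommRing R] {p : R}

theorem isAdicComplete_span_algebraMap_adicCompletion :
    IsAdicComplete (Ideal.span {algebraMap R (AdicCompletion (Ideal.span {p}) R) p})
      (AdicCompletion (Ideal.span {p}) R) := by
  rw [← Set.image_singleton, ← Ideal.map_span, IsAdicComplete.map_algebraMap_iff]
  exact AdicCompletion.isAdicComplete (Submodule.fg_span_singleton p)

theorem algebraMap_adicCompletion_mem_nonZeroDivisors (hp : p ∈ R⁰) :
    algebraMap R (AdicCompletion (Ideal.span {p}) R) p ∈
      (AdicCompletion (Ideal.span {p}) R)⁰ := by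
  refine mem_nonZeroDivisors_iff_right.mpr fun x hx ↦ ?_
  induction x using AdicCompletion.induction_on with
  | _ b =>
  refine AdicCompletion.ext_evalₐ fun n ↦ ?_
  have hdvd : p ^ n ∣ b (n + 1) := by
    have h := congrArg (AdicCompletion.evalₐ (Ideal.span {p}) (n + 1)) hx
    rw [map_mul, AdicCompletion.evalₐ_mk, AlgHom.commutes, map_zero, Ideal.Quotient.algebraMap_eq,
      ← map_mul, Ideal.Quotient.eq_zero_iff_mem, Ideal.span_singleton_pow,
      Ideal.mem_span_singleton, pow_succ] at h
    exact (dvd_cancel_right_mem_nonZeroDivisors hp).mp h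
  rw [AdicCompletion.evalₐ_mk, map_zero, ← AdicCompletion.Ideal.mk_eq_mk _ n.le_succ,
    Ideal.Quotient.eq_zero_iff_mem, Ideal.span_singleton_pow, Ideal.mem_span_singleton]
  exact hdvd

theorem nonempty_powerSeries_ringEquiv_adicCompletion (hp : p ∈ R⁰)
    (σ : R ⧸ Ideal.span {p} →+* AdicCompletion (Ideal.span {p}) R)
    (hσ : Function.LeftInverse (AdicCompletion.evalOneₐ (Ideal.span {p})) σ) :
    Nonempty ((R ⧸ Ideal.span {p})⟦X⟧ ≃+* AdicCompletion (Ideal.span {p}) R) := by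
  have := isAdicComplete_span_algebraMap_adicCompletion (p := p)
  have ker_eq := AdicCompletion.ker_evalOneₐ_eq_map (I := Ideal.span {p})
    (Submodule.fg_span_singleton p)
  rw [Ideal.map_span, Set.image_singleton] at ker_eq
  refine nonempty_powerSeries_ringEquiv_of_isAdicComplete
    (algebraMap_adicCompletion_mem_nonZeroDivisors hp) σ ?_
  rw [← ker_eq]
  exact (RingHom.quotientKerEquivOfRightInverse hσ).symm.bijective

end AdicCompletion

section CoefficientField

open MvPolynomial (aeval aeval_rename aeval_algebraMap_apply pderiv pderiv_rename rename
  exists_rename_eq_of_vars_subset_range)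

theorem exists_perfectField_ringHom (k : Type*) [Field k] :
    ∃ (K : Type) (_ : Field K) (_ : PerfectField K), Nonempty (K →+* k) := by
  obtain ⟨q, _⟩ := CharP.exists k
  rcases CharP.char_is_prime_or_zero k q with hq | rfl
  · have := Fact.mk hq
    exact ⟨ZMod q, inferInstance, inferInstance, ⟨ZMod.castHom dvd_rfl k⟩⟩
  · have := CharP.charP_to_charZero k
    exact ⟨ℚ, inferInstance, inferInstance, ⟨algebraMap ℚ k⟩⟩

theorem subsingleton_h1Cotangent_iff {R S : Type*} [CommRing R] [CommRing S] [Algebra R S] :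
    Subsingleton (Algebra.H1Cotangent R S) ↔
      ∀ f : MvPolynomial S R, aeval (id : S → S) f = 0 →
        (∀ s, aeval (id : S → S) (pderiv s f) = 0) →
        f ∈ RingHom.ker (aeval (R := R) (id : S → S)) ^ 2 := by
  let P := Algebra.Generators.self R S
  have cotangentComplex_mk_eq_zero_iff (f : P.toExtension.ker) :
      P.toExtension.cotangentComplex (.mk f) = 0 ↔
        ∀ s, aeval (id : S → S) (pderiv s f.1) = 0 := by
    rw [Algebra.Extension.cotangentComplex_mk, ← P.cotangentSpaceBasis.repr.map_eq_zero_iff,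
      Finsupp.ext_iff]
    refine forall_congr' fun s ↦ ?_
    rw [P.cotangentSpaceBasis_repr_one_tmul]
    rfl
  change Subsingleton P.toExtension.H1Cotangent ↔ _
  rw [Algebra.Extension.subsingleton_h1Cotangent, injective_iff_map_eq_zero,
    Algebra.Extension.Cotangent.mk_surjective.forall]
  simp only [cotangentComplex_mk_eq_zero_iff, Algebra.Extension.Cotangent.mk_eq_zero_iff]
  exact Subtype.forall

/-- An element of `H¹` of the cotangent complex is represented by a polynomial, which involves only
finitely many elements of `F`. -/
theorem formallySmooth_of_forall_finset {K F : Type*} [Field K] [Field F] [Algebra K F]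
    (h : ∀ s : Finset F, ∃ E : IntermediateField K F, ↑s ⊆ (E : Set F) ∧
      Algebra.FormallySmooth K E) :
    Algebra.FormallySmooth K F := by
  refine ⟨inferInstance, subsingleton_h1Cotangent_iff.mpr fun f hf hdf ↦ ?_⟩
  obtain ⟨E, hvars, hE⟩ := h f.vars
  obtain ⟨g, rfl⟩ := exists_rename_eq_of_vars_subset_range f (Subtype.val : E → F)
    Subtype.val_injective fun s hs ↦ ⟨⟨s, hvars hs⟩, rfl⟩
  have aeval_rename_val (q : MvPolynomial E K) :
      aeval (id : F → F) (rename Subtype.val q) = algebraMap E F (aeval (id : E → E) q) := by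
    rw [aeval_rename, ← aeval_algebraMap_apply]
    rfl
  have aeval_eq_zero_of_rename {q : MvPolynomial E K}
      (hq : aeval (id : F → F) (rename Subtype.val q) = 0) : aeval (id : E → E) q = 0 := by
    rwa [aeval_rename_val, map_eq_zero] at hq
  have hg : g ∈ RingHom.ker (aeval (R := K) (id : E → E)) ^ 2 :=
    subsingleton_h1Cotangent_iff.mp hE.subsingleton_h1Cotangent g (aeval_eq_zero_of_rename hf)
      fun s ↦ aeval_eq_zero_of_rename <| by
        rw [← pderiv_rename Subtype.val_injective]
        exact hdf s
  have map_ker_le : (RingHom.ker (aeval (R := K) (id : E → E))).map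
      (rename (R := K) (Subtype.val : E → F)) ≤ RingHom.ker (aeval (R := K) (id : F → F)) :=
    Ideal.map_le_iff_le_comap.mpr fun q hq ↦ by
      rw [Ideal.mem_comap, RingHom.mem_ker, aeval_rename_val, RingHom.mem_ker.mp hq, map_zero]
  refine Ideal.pow_right_mono map_ker_le 2 ?_
  rw [← Ideal.map_pow]
  exact Ideal.mem_map_of_mem _ hg

theorem formallySmooth_of_perfectField (K F : Type*) [Field K] [PerfectField K] [Field F]
    [Algebra K F] : Algebra.FormallySmooth K F :=
  formallySmooth_of_forall_finset fun s ↦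
    have : Algebra.EssFiniteType K (IntermediateField.adjoin K (s : Set F)) :=
      IntermediateField.essFiniteType_iff.mpr ⟨s, rfl⟩
    ⟨_, IntermediateField.subset_adjoin K _, inferInstance⟩

theorem exists_ringHom_leftInverse_evalOneₐ (k : Type*) {R : Type*} [Field k] [CommRing R]
    [Algebra k R] (I : Ideal R) [I.IsMaximal] :
    ∃ σ : R ⧸ I →+* AdicCompletion I R,
      Function.LeftInverse (AdicCompletion.evalOneₐ I) σ := by
  obtain ⟨K, _, _, ⟨i⟩⟩ := exists_perfectField_ringHom k
  let _ : Algebra K R := ((algebraMap k R).comp i).toAlgebra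
  let _ : Field (R ⧸ I) := Ideal.Quotient.field I
  have := formallySmooth_of_perfectField K (R ⧸ I)
  obtain ⟨σ, hσ⟩ :=
    Algebra.FormallySmooth.exists_adicCompletionEvalOneₐ_comp_eq (AlgHom.id K (R ⧸ I))
  exact ⟨σ, DFunLike.congr_fun hσ⟩

end CoefficientField

theorem stmt_5_general (k : Type*) {R : Type*} (L : Type*) [Field k] [CommRing R] [Algebra k R]
    [CommRing L] [Algebra R L] {p : R} (hp : p ∈ R⁰) [IsLocalization.Away p L]
    [(Ideal.span {p}).IsMaximal] :
    Nonempty (Module.End R (L ⧸ LinearMap.range (Algebra.linearMap R L)) ≃+*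
      PowerSeries (R ⧸ Ideal.span {p})) := by
  obtain ⟨σ, hσ⟩ := exists_ringHom_leftInverse_evalOneₐ k (Ideal.span {p})
  obtain ⟨e⟩ := nonempty_powerSeries_ringEquiv_adicCompletion hp σ hσ
  exact ⟨(isPruferSequence_mkQ_invSelf_pow L hp).endEquivAdicCompletion.trans e.symm⟩

/-- For a field `k` and an irreducible polynomial `p ∈ k[x]`, the
endomorphism ring of the Prüfer module `k[x][1/p]/k[x]` is isomorphic as a ring to the
formal power series ring in one variable over the field `k[x]/(p)`. -/
theorem stmt_5 (k : Type*) [Field k] (p : Polynomial k) (hp : Irreducible p) :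
    Nonempty (Module.End (Polynomial k) (PruferModule k p) ≃+*
      PowerSeries (Polynomial k ⧸ Ideal.span {p})) := by
  have := PrincipalIdealRing.isMaximal_of_irreducible hp
  exact stmt_5_general k (Localization.Away p) (mem_nonZeroDivisors_of_ne_zero hp.ne_zero)
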